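/- Let F be a field with algebraic closure F̄ and let r ≥ 2. Call a subset Δ ⊆ SL_r(F) Zariski dense in SL_r if every polynomial f ∈ F[X₁₁,…,X_rr] in the r² matrix entries that vanishes at every element of Δ vanishes at every element of SL_r(F̄). If Δ ⊆ SL_r(F) is Zariski dense in SL_r, then the set { tr(δ)·tr(δ⁻¹) : δ ∈ Δ } is infinite. -/

import Mathlib

/-!
If `tr(δ)·tr(δ⁻¹)` took only the values `s₁, …, s_m` on `Δ`, then `∏ (tr(X)·tr(adj X) - s_k)` would
vanish on `Δ`, hence on `SL_r(F̄)`, so only the values `s_k` would occur on `SL_r(F̄)` as well. But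
the product of elementary matrices `g = (1 + E_ij)(1 + c E_ji)` has `tr g = tr g⁻¹ = r + c`, so
every square is a value there, and an infinite domain has infinitely many squares.
-/

open MvPolynomial

/-- Zariski density of a set `S` of points over `R` in a set `T` of points over an `R`-algebra `K`:
every polynomial over `R` vanishing on `S` vanishes on `T`. The image of `S` in `K`-points need not
lie in `T`. -/
def IsZariskiDenseIn {σ R K : Type*} [CommRing R] [CommRing K] [Algebra R K]
    (S : Set (σ → R)) (T : Set (σ → K)) : Prop :=
  ∀ f : MvPolynomial σ R, (∀ x ∈ S, eval x f = 0) → ∀ y ∈ T, aeval y f = 0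

namespace IsZariskiDenseIn

variable {σ R K : Type*} [CommRing R] [CommRing K] [IsDomain K] [Algebra R K]
  {S : Set (σ → R)} {T : Set (σ → K)}

theorem aeval_mem_image_algebraMap (h : IsZariskiDenseIn S T) {p : MvPolynomial σ R} {s : Set R}
    (hs : s.Finite) (hp : ∀ x ∈ S, eval x p ∈ s) {y : σ → K} (hy : y ∈ T) :
    aeval y p ∈ algebraMap R K '' s := by
  have vanishes_on_S : ∀ x ∈ S, eval x (∏ a ∈ hs.toFinset, (p - C a)) = 0 := fun x hx => by
    rw [map_prod]
    exact Finset.prod_eq_zero (hs.mem_toFinset.mpr (hp x hx)) (by simp)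
  have vanishes_at_y := h _ vanishes_on_S y hy
  rw [map_prod, Finset.prod_eq_zero_iff] at vanishes_at_y
  obtain ⟨a, ha, hay⟩ := vanishes_at_y
  rw [map_sub, aeval_C, sub_eq_zero] at hay
  exact ⟨a, hs.mem_toFinset.mp ha, hay.symm⟩

theorem infinite_image_eval (h : IsZariskiDenseIn S T) {p : MvPolynomial σ R}
    (hT : ((aeval · p) '' T).Infinite) : ((eval · p) '' S).Infinite := fun hS =>
  hT <| (hS.image (algebraMap R K)).subset <| Set.image_subset_iff.mpr fun _ hy =>
    h.aeval_mem_image_algebraMap hS (fun _ hx => Set.mem_image_of_mem _ hx) hy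

end IsZariskiDenseIn

theorem infinite_range_pow {K : Type*} [CommRing K] [IsDomain K] [Infinite K] {k : ℕ}
    (hk : 0 < k) : (Set.range fun x : K => x ^ k).Infinite := by
  rw [← Set.image_univ]
  refine fun himage => Set.infinite_univ <| himage.of_finite_fibers _ fun a _ => ?_
  have hfiber : {x : K | x ^ k = a}.Finite := by
    rw [← Polynomial.nthRootsFinset_toSet hk a]
    exact Finset.finite_toSet _
  exact hfiber.inter_of_right _

section SpecialLinearGroup

variable {n R : Type*} [Fintype n] [DecidableEq n] [CommRing R]

/-- The function `g ↦ tr(g)·tr(g⁻¹)` on `SL_n(R)`, which is the trace of conjugation by `g` on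
`n × n` matrices. -/
def traceMulTraceInv (g : Matrix.SpecialLinearGroup n R) : R :=
  (g : Matrix n n R).trace * ((g⁻¹ : Matrix.SpecialLinearGroup n R) : Matrix n n R).trace

theorem trace_transvection_mul_transvection {i j : n} (hij : i ≠ j) (a b : R) :
    (Matrix.transvection i j a * Matrix.transvection j i b).trace = Fintype.card n + a * b := by
  simp [Matrix.transvection, mul_add, add_mul, hij, hij.symm, Matrix.trace_single_eq_of_ne]

theorem exists_traceMulTraceInv_eq_sq [Nontrivial n] (u : R) :
    ∃ g : Matrix.SpecialLinearGroup n R, traceMulTraceInv g = u ^ 2 := by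
  obtain ⟨i, j, hij⟩ := exists_pair_ne n
  let E := Matrix.SpecialLinearGroup.transvection (F := R) hij
  let E' := Matrix.SpecialLinearGroup.transvection (F := R) hij.symm
  let c := u - Fintype.card n
  have trace_eq : (E 1 * E' c).1.trace = u :=
    (trace_transvection_mul_transvection hij 1 c).trans (by simp [c])
  have inv_eq : (E 1 * E' c)⁻¹ = E' (-c) * E (-1) := by
    simp only [E, E', mul_inv_rev, Matrix.SpecialLinearGroup.transvection_inv]
  have trace_inv_eq : (E' (-c) * E (-1)).1.trace = u :=
    (trace_transvection_mul_transvection hij.symm (-c) (-1)).trans (by simp [c])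
  exact ⟨E 1 * E' c, by rw [traceMulTraceInv, inv_eq, trace_eq, trace_inv_eq, sq]⟩

/-- The point of affine space given by the entries of a matrix in `SL_n`, with coordinates indexed
as the variables of `Matrix.mvPolynomialX`. -/
def specialLinearPoint (g : Matrix.SpecialLinearGroup n R) : n × n → R :=
  fun p => (g : Matrix n n R) p.1 p.2

variable (n R) in
/-- The polynomial `tr(X)·tr(adj X)` in the entries of the generic matrix `X`, which represents
`traceMulTraceInv` because `g⁻¹ = adj g` on `SL_n`. -/
noncomputable def traceMulTraceAdjugate : MvPolynomial (n × n) R :=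
  (Matrix.mvPolynomialX n n R).trace * (Matrix.mvPolynomialX n n R).adjugate.trace

theorem aeval_traceMulTraceAdjugate {K : Type*} [CommRing K] [Algebra R K]
    (g : Matrix.SpecialLinearGroup n K) :
    aeval (specialLinearPoint g) (traceMulTraceAdjugate n R) = traceMulTraceInv g := by
  let φ : MvPolynomial (n × n) R →ₐ[R] K := aeval (specialLinearPoint g)
  have map_generic : φ.mapMatrix (Matrix.mvPolynomialX n n R) = (g : Matrix n n K) :=
    Matrix.mvPolynomialX_mapMatrix_aeval R (g : Matrix n n K)
  have map_trace (M : Matrix n n (MvPolynomial (n × n) R)) :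
      φ M.trace = (φ.mapMatrix M).trace :=
    AddMonoidHom.map_trace φ M
  calc φ (traceMulTraceAdjugate n R)
      = (g : Matrix n n K).trace * (g : Matrix n n K).adjugate.trace := by
        rw [traceMulTraceAdjugate, map_mul, map_trace, map_trace, AlgHom.map_adjugate, map_generic]
    _ = traceMulTraceInv g := by rw [traceMulTraceInv, Matrix.SpecialLinearGroup.coe_inv]

theorem infinite_adjoint_trace_values_of_zariski_dense_general [Nontrivial n]
    {K : Type*} [CommRing K] [IsDomain K] [Infinite K] [Algebra R K]
    {Δ : Set (Matrix.SpecialLinearGroup n R)}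
    (hΔ : IsZariskiDenseIn (specialLinearPoint '' Δ)
      (Set.range (specialLinearPoint (n := n) (R := K)))) :
    (traceMulTraceInv '' Δ).Infinite := by
  have squares_are_values : Set.range (fun u : K => u ^ 2) ⊆
      (aeval · (traceMulTraceAdjugate n R)) '' Set.range specialLinearPoint := by
    rintro _ ⟨u, rfl⟩
    obtain ⟨g, hg⟩ := exists_traceMulTraceInv_eq_sq (n := n) u
    exact ⟨specialLinearPoint g, ⟨g, rfl⟩, (aeval_traceMulTraceAdjugate g).trans hg⟩
  have infinite_values :=
    hΔ.infinite_image_eval ((infinite_range_pow two_pos).mono squares_are_values)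
  simpa only [Set.image_image, ← coe_aeval_eq_eval, RingHom.coe_coe,
    aeval_traceMulTraceAdjugate] using infinite_values

end SpecialLinearGroup

/-- If `Δ ⊆ SL_r(F)` (`r ≥ 2`) is Zariski dense in `SL_r` — meaning every polynomial in the
`r²` matrix entries vanishing on `Δ` vanishes on `SL_r(F̄)` for an algebraic closure `F̄`
of `F` — then `δ ↦ tr(δ)·tr(δ⁻¹)` takes infinitely many values on `Δ`. -/
theorem infinite_adjoint_trace_values_of_zariski_dense
    (F Fbar : Type*) [Field F] [Field Fbar] [Algebra F Fbar] [IsAlgClosure F Fbar]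
    (r : ℕ) (hr : 2 ≤ r)
    (Δ : Set (Matrix.SpecialLinearGroup (Fin r) F))
    (hdense : ∀ f : MvPolynomial (Fin r × Fin r) F,
      (∀ δ ∈ Δ, MvPolynomial.eval
          (fun ij => (δ : Matrix (Fin r) (Fin r) F) ij.1 ij.2) f = 0) →
      ∀ g : Matrix.SpecialLinearGroup (Fin r) Fbar,
        MvPolynomial.eval (fun ij => (g : Matrix (Fin r) (Fin r) Fbar) ij.1 ij.2)
          (MvPolynomial.map (algebraMap F Fbar) f) = 0) :
    Set.Infinite {x : F | ∃ δ ∈ Δ,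
      Matrix.trace ((δ : Matrix (Fin r) (Fin r) F)) *
        Matrix.trace ((δ⁻¹ : Matrix.SpecialLinearGroup (Fin r) F) : Matrix (Fin r) (Fin r) F)
      = x} := by
  have : IsAlgClosed Fbar := IsAlgClosure.isAlgClosed F
  have : Infinite Fbar := IsAlgClosed.instInfinite
  have : Nontrivial (Fin r) := Fin.nontrivial_iff_two_le.mpr hr
  refine infinite_adjoint_trace_values_of_zariski_dense_general (K := Fbar) ?_
  rintro f hf _ ⟨g, rfl⟩
  rw [aeval_def, ← eval_map]
  exact hdense f (fun δ hδ => hf _ (Set.mem_image_of_mem _ hδ)) g
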